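/- arXiv:2104.06130 — 6 statements merged into one kernel-verified Lean document; each statement's English description precedes it below -/
import Mathlib

section
/- Let n ≥ 3 and let x_1, …, x_n be distinct real numbers. If θ̂ ∈ ℍ maximizes the Cauchy likelihood L over ℍ (i.e., L(θ) ≤ L(θ̂) for all θ ∈ ℍ), then n·h(θ̂) − (θ̂ − conj(θ̂))·h'(θ̂) = 0, where h'(θ) denotes the derivative of the polynomial h at θ. -/
open Complex Finset

/-- The Cauchy likelihood of the sample `x` at parameter `θ = μ + iσ`. -/
noncomputable def cauchyL {n : ℕ} (x : Fin n → ℝ) (θ : ℂ) : ℝ :=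
  ∏ j, (θ.im / Real.pi) / ((x j - θ.re) ^ 2 + θ.im ^ 2)

/-- The polynomial `h(θ) = ∏ (x_j − θ)`. -/
noncomputable def hpoly {n : ℕ} (x : Fin n → ℝ) : ℂ → ℂ :=
  fun θ => ∏ j, ((x j : ℂ) - θ)

/-!
Since `(x_j - Re θ)² + (Im θ)² = |x_j - θ|²`, the likelihood is `(Im θ / π)ⁿ / |h(θ)|²`.
Identify `ℂ` with the Euclidean plane. For holomorphic `h` with logarithmic derivative `ℓ`, the
gradient of `log |h|²` is `2 conj ℓ`, and the gradient of `log Im` is `i / Im`. Hence the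
log-likelihood has gradient `n i / Im θ - 2 conj ℓ(θ)`, which vanishes exactly when
`n = 2 i (Im θ) ℓ(θ) = (θ - conj θ) ℓ(θ)`.
-/

open scoped ComplexConjugate Topology

theorem hasGradientAt_log_im {z : ℂ} (hz : z.im ≠ 0) :
    HasGradientAt (fun w : ℂ => Real.log w.im) (I / z.im) z := by
  rw [hasGradientAt_iff_hasFDerivAt]
  refine (imCLM.hasFDerivAt.log hz).congr_fderiv ?_
  ext v
  simp [Complex.inner, div_eq_mul_inv, ← ofReal_inv, mul_comm]

theorem hasGradientAt_log_norm_sq {f : ℂ → ℂ} {z : ℂ} (hf : DifferentiableAt ℂ f z)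
    (hz : f z ≠ 0) :
    HasGradientAt (fun w => Real.log (‖f w‖ ^ 2)) (2 * conj (logDeriv f z)) z := by
  rw [hasGradientAt_iff_hasFDerivAt]
  have hnorm : ‖f z‖ ^ 2 ≠ 0 := by positivity
  refine (hf.hasDerivAt.complexToReal_fderiv.norm_sq.log hnorm).congr_fderiv ?_
  ext v
  have hderiv : deriv f z * conj (f z) = (‖f z‖ ^ 2 : ℝ) * logDeriv f z := by
    rw [logDeriv_apply, ofReal_pow, ← mul_conj']
    field_simp
  have hinner : inner ℝ (f z) (deriv f z * v) = ‖f z‖ ^ 2 * (logDeriv f z * v).re := by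
    rw [Complex.inner, mul_right_comm, hderiv, mul_assoc, re_ofReal_mul]
  calc (‖f z‖ ^ 2)⁻¹ * (2 • inner ℝ (f z) (deriv f z * v))
      = (2 * (logDeriv f z * v)).re := by
        rw [hinner, nsmul_eq_mul, mul_left_comm, inv_mul_cancel_left₀ hnorm]
        simp
    _ = inner ℝ (2 * conj (logDeriv f z)) v := by
        rw [Complex.inner, map_mul, conj_conj, map_ofNat, mul_comm v, mul_assoc]

section CauchyLikelihood

variable {n : ℕ} (x : Fin n → ℝ) {θ : ℂ}

theorem differentiable_hpoly : Differentiable ℂ (hpoly x) := by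
  unfold hpoly
  fun_prop

theorem hpoly_ne_zero (hθ : θ.im ≠ 0) : hpoly x θ ≠ 0 :=
  prod_ne_zero_iff.2 fun j _ h => hθ <| by simpa using congrArg im h

theorem cauchyL_eq_div_norm_sq (θ : ℂ) :
    cauchyL x θ = (θ.im / Real.pi) ^ n / ‖hpoly x θ‖ ^ 2 := by
  have norm_sq_sub (j : Fin n) : ‖(x j : ℂ) - θ‖ ^ 2 = (x j - θ.re) ^ 2 + θ.im ^ 2 := by
    simp only [Complex.sq_norm, normSq_apply, sub_re, sub_im, ofReal_re, ofReal_im]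
    ring
  simp only [cauchyL, hpoly, norm_prod, ← prod_pow, norm_sq_sub, prod_div_distrib, prod_const,
    card_univ, Fintype.card_fin, div_pow]

theorem cauchyL_ne_zero (hθ : θ.im ≠ 0) : cauchyL x θ ≠ 0 := by
  have := hpoly_ne_zero x hθ
  rw [cauchyL_eq_div_norm_sq]
  positivity

theorem differentiableAt_cauchyL (hθ : θ.im ≠ 0) : DifferentiableAt ℝ (cauchyL x) θ := by
  have him : DifferentiableAt ℝ (fun w : ℂ => w.im) θ := imCLM.differentiableAt
  have hnorm : DifferentiableAt ℝ (fun w => ‖hpoly x w‖ ^ 2) θ :=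
    ((differentiable_hpoly x θ).restrictScalars ℝ).norm_sq ℝ
  simp only [funext (cauchyL_eq_div_norm_sq x), div_eq_mul_inv]
  exact ((him.mul_const _).fun_pow n).fun_mul (hnorm.fun_inv (by simpa using hpoly_ne_zero x hθ))

theorem log_cauchyL (hθ : θ.im ≠ 0) :
    Real.log (cauchyL x θ) =
      n * Real.log θ.im - n * Real.log Real.pi - Real.log (‖hpoly x θ‖ ^ 2) := by
  have := hpoly_ne_zero x hθ
  rw [cauchyL_eq_div_norm_sq, Real.log_div (by positivity) (by positivity), Real.log_pow,
    Real.log_div hθ Real.pi_ne_zero, mul_sub]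

/-- The score of the Cauchy family: the gradient of the log-likelihood of the sample `x`, where
`θ = μ + iσ` is regarded as a point of the Euclidean plane, so that the `μ`- and `σ`-derivatives
are the real and imaginary parts. -/
noncomputable def cauchyScore (θ : ℂ) : ℂ :=
  n * (I / θ.im) - 2 * conj (logDeriv (hpoly x) θ)

theorem hasGradientAt_log_cauchyL (hθ : θ.im ≠ 0) :
    HasGradientAt (fun w => Real.log (cauchyL x w)) (cauchyScore x θ) θ := by
  have hlog_im := (hasGradientAt_log_im hθ).hasFDerivAt
  have hlog_norm := (hasGradientAt_log_norm_sq (differentiable_hpoly x θ)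
    (hpoly_ne_zero x hθ)).hasFDerivAt
  have hlog_eq : (fun w => Real.log (cauchyL x w)) =ᶠ[𝓝 θ] fun w =>
      n * Real.log w.im - n * Real.log Real.pi - Real.log (‖hpoly x w‖ ^ 2) :=
    (continuous_im.continuousAt.eventually_ne hθ).mono fun _ hw => log_cauchyL x hw
  refine HasGradientAt.congr_of_eventuallyEq ?_ hlog_eq
  rw [hasGradientAt_iff_hasFDerivAt]
  refine (((hlog_im.const_mul (n : ℝ)).sub_const _).sub hlog_norm).congr_fderiv ?_
  rw [cauchyScore, map_sub, ← nsmul_eq_mul, map_nsmul, Nat.cast_smul_eq_nsmul]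

theorem cauchyScore_eq_zero_of_isLocalExtr (hθ : θ.im ≠ 0) (hextr : IsLocalExtr (cauchyL x) θ) :
    cauchyScore x θ = 0 := by
  have hlog : HasGradientAt (fun w => Real.log (cauchyL x w)) 0 θ := by
    rw [hasGradientAt_iff_hasFDerivAt]
    simpa [hextr.fderiv_eq_zero] using
      (differentiableAt_cauchyL x hθ).hasFDerivAt.log (cauchyL_ne_zero x hθ)
  exact (hasGradientAt_log_cauchyL x hθ).unique hlog

theorem cauchyScore_eq_zero_iff (hθ : θ.im ≠ 0) :
    cauchyScore x θ = 0 ↔ n * hpoly x θ - (θ - conj θ) * deriv (hpoly x) θ = 0 := by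
  have hh := hpoly_ne_zero x hθ
  have him : (θ.im : ℂ) ≠ 0 := ofReal_ne_zero.2 hθ
  have hconj : conj (cauchyScore x θ) * (I * θ.im * hpoly x θ) =
      n * hpoly x θ - (θ - conj θ) * deriv (hpoly x) θ := by
    simp only [cauchyScore, logDeriv_apply, sub_conj, map_sub, map_mul, map_div₀, conj_conj,
      conj_I, conj_ofReal, map_natCast, map_ofNat]
    push_cast
    field_simp
    linear_combination (-n * hpoly x θ) * I_sq
  rw [← hconj, mul_eq_zero_iff_right (by simp [hh, him]), map_eq_zero]

end CauchyLikelihood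

theorem stmt_0_general (n : ℕ) (x : Fin n → ℝ) (θ : ℂ) (hθ : θ.im ≠ 0)
    (hextr : IsLocalExtr (cauchyL x) θ) :
    (n : ℂ) * hpoly x θ - (θ - (starRingEnd ℂ) θ) * deriv (hpoly x) θ = 0 :=
  (cauchyScore_eq_zero_iff x hθ).1 (cauchyScore_eq_zero_of_isLocalExtr x hθ hextr)

theorem stmt_0 (n : ℕ) (hn : 3 ≤ n) (x : Fin n → ℝ) (hx : Function.Injective x)
    (θhat : ℂ) (hθhat : 0 < θhat.im)
    (hmax : ∀ θ : ℂ, 0 < θ.im → cauchyL x θ ≤ cauchyL x θhat) :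
    (n : ℂ) * hpoly x θhat - (θhat - (starRingEnd ℂ) θhat) * deriv (hpoly x) θhat = 0 :=
  stmt_0_general n x θhat hθhat.ne' <| .inr <|
    (continuous_im.continuousAt.eventually_const_lt hθhat).mono hmax
end

section
/- Let n ≥ 1, let x_1, …, x_n be real numbers, and let θ ∈ ℍ. Set w = (1/n)·∑_{j=1}^n (x_j − θ)/(x_j − conj(θ)). Then w ≠ 1 and q(θ) = conj( (θ − conj(θ)·w)/(1 − w) ); that is, q(θ) is the complex conjugate of the image of w under the inverse of the Möbius map ζ ↦ (ζ − θ)/(ζ − conj(θ)). -/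
open Complex Finset

/-- `q(θ) = θ − n·h(θ)/h'(θ)`. -/
noncomputable def qmap {n : ℕ} (x : Fin n → ℝ) : ℂ → ℂ :=
  fun θ => θ - (n : ℂ) * hpoly x θ / deriv (hpoly x) θ

/-!
The Möbius map `ζ ↦ (ζ - u) / (ζ - v) = 1 + (v - u) * (ζ - v)⁻¹` is affine in `(ζ - v)⁻¹`, so the
average of its values at the `x j` is its value at the point `v + n / ∑ j, (x j - v)⁻¹`. Logarithmic
differentiation of `h` identifies this point as `q v`. Take `u = θ` and `v = conj θ`: the sum does
not vanish, since the imaginary parts of its terms all have the sign of `im v`, and `q` commutes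
with complex conjugation because the `x j` are real.
-/

open scoped ComplexConjugate

section Field

variable {ι K : Type*} [Field K]

theorem sum_sub_div_sub (s : Finset ι) (a : ι → K) (u : K) {v : K} (hv : ∀ i ∈ s, a i - v ≠ 0) :
    ∑ i ∈ s, (a i - u) / (a i - v) = #s + (v - u) * ∑ i ∈ s, (a i - v)⁻¹ := by
  have hterm : ∀ i ∈ s, (a i - u) / (a i - v) = 1 + (v - u) * (a i - v)⁻¹ := by
    intro i hi
    have := hv i hi
    field_simp
    ring
  rw [sum_congr rfl hterm, sum_add_distrib, ← mul_sum, sum_const, nsmul_one]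

theorem sub_mul_div_one_sub_of_eq_one_add {u v t w : K} (huv : u ≠ v) (ht : t ≠ 0)
    (hw : w = 1 + (v - u) * t) : (u - v * w) / (1 - w) = v + t⁻¹ := by
  have h : u - v ≠ 0 := sub_ne_zero.mpr huv
  have hden : 1 - w = (u - v) * t := by rw [hw]; ring
  rw [hden, hw]
  field_simp
  ring

end Field

theorem logDeriv_prod_const_sub {ι 𝕜 : Type*} [NontriviallyNormedField 𝕜] (s : Finset ι)
    (a : ι → 𝕜) {z : 𝕜} (hz : ∀ i ∈ s, a i - z ≠ 0) :
    logDeriv (fun y => ∏ i ∈ s, (a i - y)) z = -∑ i ∈ s, (a i - z)⁻¹ := by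
  rw [logDeriv_prod hz (fun i _ => by fun_prop), ← sum_neg_distrib]
  simp [logDeriv_apply, neg_div]

theorem ofReal_sub_ne_zero (a : ℝ) {z : ℂ} (hz : z.im ≠ 0) : (a : ℂ) - z ≠ 0 := fun h =>
  hz (by simpa using congrArg im h)

theorem im_sum_inv_ofReal_sub {ι : Type*} (s : Finset ι) (a : ι → ℝ) (z : ℂ) :
    (∑ i ∈ s, ((a i : ℂ) - z)⁻¹).im = z.im * ∑ i ∈ s, (normSq (a i - z))⁻¹ := by
  simp [mul_sum, inv_im, div_eq_mul_inv]

theorem sum_inv_ofReal_sub_ne_zero {ι : Type*} {s : Finset ι} (hs : s.Nonempty) (a : ι → ℝ) {z : ℂ}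
    (hz : z.im ≠ 0) : ∑ i ∈ s, ((a i : ℂ) - z)⁻¹ ≠ 0 := by
  have hpos : 0 < ∑ i ∈ s, (normSq (a i - z))⁻¹ :=
    sum_pos (fun i _ => inv_pos.mpr (normSq_pos.mpr (ofReal_sub_ne_zero (a i) hz))) hs
  intro h
  apply mul_ne_zero hz hpos.ne'
  rw [← im_sum_inv_ofReal_sub, h, zero_im]

section RealRoots

variable {n : ℕ} (x : Fin n → ℝ)

theorem qmap_eq_add_div_sum_inv {z : ℂ} (hz : ∀ j, (x j : ℂ) - z ≠ 0) :
    qmap x z = z + n / ∑ j, ((x j : ℂ) - z)⁻¹ := by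
  have hlog : logDeriv (hpoly x) z = -∑ j, ((x j : ℂ) - z)⁻¹ :=
    logDeriv_prod_const_sub univ (fun j => (x j : ℂ)) fun j _ => hz j
  calc qmap x z = z - n / logDeriv (hpoly x) z := by
        rw [qmap, logDeriv_apply, div_div_eq_mul_div]
    _ = z + n / ∑ j, ((x j : ℂ) - z)⁻¹ := by rw [hlog, div_neg, sub_neg_eq_add]

theorem hpoly_conj (z : ℂ) : hpoly x (conj z) = conj (hpoly x z) := by
  simp [hpoly]

theorem deriv_hpoly_conj (z : ℂ) : deriv (hpoly x) (conj z) = conj (deriv (hpoly x) z) := by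
  have hsymm : conj ∘ hpoly x ∘ conj = hpoly x := by
    ext y
    simp [hpoly_conj]
  calc deriv (hpoly x) (conj z) = deriv (conj ∘ hpoly x ∘ conj) (conj z) := by rw [hsymm]
    _ = conj (deriv (hpoly x) z) := by simp [deriv_conj_conj]

theorem qmap_conj (z : ℂ) : qmap x (conj z) = conj (qmap x z) := by
  simp [qmap, hpoly_conj, deriv_hpoly_conj]

end RealRoots

theorem stmt_2_general (n : ℕ) (hn : 1 ≤ n) (x : Fin n → ℝ) (θ : ℂ) (hθ : θ.im ≠ 0) (w : ℂ)
    (hw : w = (1 / (n : ℂ)) * ∑ j, ((x j : ℂ) - θ) / ((x j : ℂ) - conj θ)) :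
    w ≠ 1 ∧ qmap x θ = conj ((θ - conj θ * w) / (1 - w)) := by
  have hn0 : (n : ℂ) ≠ 0 := Nat.cast_ne_zero.mpr (by lia)
  have hne : θ ≠ conj θ := fun h => hθ (conj_eq_iff_im.mp h.symm)
  have hcim : (conj θ).im ≠ 0 := by simpa using hθ
  have hsub : ∀ j, (x j : ℂ) - conj θ ≠ 0 := fun j => ofReal_sub_ne_zero (x j) hcim
  set S := ∑ j, ((x j : ℂ) - conj θ)⁻¹ with hS
  have hS0 : S / n ≠ 0 :=
    div_ne_zero (sum_inv_ofReal_sub_ne_zero ⟨⟨0, hn⟩, mem_univ _⟩ x hcim) hn0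
  have hwS : w = 1 + (conj θ - θ) * (S / n) := by
    rw [hw, sum_sub_div_sub univ (fun j => (x j : ℂ)) θ fun j _ => hsub j, card_fin, ← hS]
    field_simp
  constructor
  · rw [hwS, Ne, add_eq_left]
    exact mul_ne_zero (sub_ne_zero.mpr hne.symm) hS0
  · rw [sub_mul_div_one_sub_of_eq_one_add hne hS0 hwS, inv_div, hS,
      ← qmap_eq_add_div_sum_inv x hsub, qmap_conj, conj_conj]

theorem stmt_2 (n : ℕ) (hn : 1 ≤ n) (x : Fin n → ℝ) (θ : ℂ) (hθ : 0 < θ.im)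
    (w : ℂ)
    (hw : w = (1 / (n : ℂ)) * ∑ j, ((x j : ℂ) - θ) / ((x j : ℂ) - (starRingEnd ℂ) θ)) :
    w ≠ 1 ∧
      qmap x θ =
        (starRingEnd ℂ) ((θ - (starRingEnd ℂ) θ * w) / (1 - w)) := by
  exact stmt_2_general n hn x θ hθ.ne' w hw
end

section
/- Let n ≥ 3 and let x_1, …, x_n be distinct real numbers. If θ̂ ∈ ℍ maximizes the Cauchy likelihood L over ℍ, then ∑_{j=1}^n (x_j − θ̂)/(x_j − conj(θ̂)) = 0. -/
open Complex Finset

/-!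
Let `p_θ(y)` be the Cauchy density. Since `log p_θ(y) = log Im θ - log |y - θ|² - log π`, its
derivative at `θ` in the direction `v ∈ ℂ` is `-Im (conj v * r) / Im θ`, where
`r = (y - θ) / (y - conj θ)`. At an extremum of the likelihood these derivatives sum to zero over
the sample, so `Im (conj v * ∑ r_j) = 0` for every direction `v`. The directions `v = 1` and
`v = I` show that the imaginary and real parts of `∑ r_j` vanish.
-/

open scoped ComplexConjugate

theorem logDeriv_line_eq_zero_of_isLocalExtr {E : Type*} [AddCommGroup E] [Module ℝ E]
    [TopologicalSpace E] [ContinuousAdd E] [ContinuousSMul ℝ E] {f : E → ℝ} {a : E}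
    (hf : IsLocalExtr f a) (v : E) : logDeriv (fun t : ℝ ↦ f (a + t • v)) 0 = 0 := by
  have hline : ContinuousAt (fun t : ℝ ↦ a + t • v) 0 := by fun_prop
  have hextr : IsLocalExtr (fun t : ℝ ↦ f (a + t • v)) 0 :=
    IsLocalExtr.comp_continuous (g := fun t : ℝ ↦ a + t • v) (by simpa using hf) hline
  rw [logDeriv_apply, hextr.deriv_eq_zero, zero_div]

/-- The Cauchy density at `y` with location `θ.re` and scale `θ.im`. Mathlib's
`ProbabilityTheory.cauchyPDFReal` takes its scale in `ℝ≥0`; a single complex parameter allows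
differentiation along lines in the parameter plane. -/
noncomputable def cauchyDensity (θ : ℂ) (y : ℝ) : ℝ :=
  (θ.im / Real.pi) / ((y - θ.re) ^ 2 + θ.im ^ 2)

theorem cauchyL_eq_prod_cauchyDensity {n : ℕ} (x : Fin n → ℝ) (θ : ℂ) :
    cauchyL x θ = ∏ j, cauchyDensity θ (x j) := rfl

theorem cauchyDensity_ne_zero {θ : ℂ} (hθ : θ.im ≠ 0) (y : ℝ) : cauchyDensity θ y ≠ 0 := by
  unfold cauchyDensity
  positivity

theorem sub_div_sub_conj_re (θ : ℂ) (y : ℝ) :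
    (((y : ℂ) - θ) / (y - conj θ)).re =
      ((y - θ.re) ^ 2 - θ.im ^ 2) / ((y - θ.re) ^ 2 + θ.im ^ 2) := by
  simp only [div_re, normSq_apply, sub_re, sub_im, ofReal_re, ofReal_im, conj_re, conj_im]
  ring

theorem sub_div_sub_conj_im (θ : ℂ) (y : ℝ) :
    (((y : ℂ) - θ) / (y - conj θ)).im =
      -(2 * θ.im * (y - θ.re)) / ((y - θ.re) ^ 2 + θ.im ^ 2) := by
  simp only [div_im, normSq_apply, sub_re, sub_im, ofReal_re, ofReal_im, conj_re, conj_im]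
  ring

theorem hasDerivAt_cauchyDensity_line {θ : ℂ} (hθ : θ.im ≠ 0) (y : ℝ) (v : ℂ) :
    HasDerivAt (fun t : ℝ ↦ cauchyDensity (θ + t • v) y)
      (cauchyDensity θ y * (-(conj v * (((y : ℂ) - θ) / (y - conj θ))).im / θ.im)) 0 := by
  have hD : (y - θ.re) ^ 2 + θ.im ^ 2 ≠ 0 := by positivity
  have hre : HasDerivAt (fun t : ℝ ↦ θ.re + t * v.re) v.re 0 := by
    simpa using ((hasDerivAt_id (0 : ℝ)).mul_const v.re).const_add θ.re
  have him : HasDerivAt (fun t : ℝ ↦ θ.im + t * v.im) v.im 0 := by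
    simpa using ((hasDerivAt_id (0 : ℝ)).mul_const v.im).const_add θ.im
  have hquot := (him.div_const Real.pi).fun_div
    (((hre.const_sub y).fun_pow 2).fun_add (him.fun_pow 2)) (by simpa using hD)
  simp only [cauchyDensity, add_re, add_im, smul_re, smul_im, smul_eq_mul]
  refine hquot.congr_deriv ?_
  rw [mul_im, conj_re, conj_im, sub_div_sub_conj_re, sub_div_sub_conj_im]
  simp only [zero_mul, add_zero, Nat.cast_ofNat, Nat.add_one_sub_one, pow_one]
  field_simp
  ring

theorem logDeriv_cauchyDensity_line {θ : ℂ} (hθ : θ.im ≠ 0) (y : ℝ) (v : ℂ) :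
    logDeriv (fun t : ℝ ↦ cauchyDensity (θ + t • v) y) 0 =
      -(conj v * (((y : ℂ) - θ) / (y - conj θ))).im / θ.im := by
  rw [logDeriv_apply, (hasDerivAt_cauchyDensity_line hθ y v).deriv, zero_smul, add_zero,
    mul_div_cancel_left₀ _ (cauchyDensity_ne_zero hθ y)]

theorem logDeriv_cauchyL_line {n : ℕ} (x : Fin n → ℝ) {θ : ℂ} (hθ : θ.im ≠ 0) (v : ℂ) :
    logDeriv (fun t : ℝ ↦ cauchyL x (θ + t • v)) 0 =
      -(conj v * ∑ j, ((x j : ℂ) - θ) / (x j - conj θ)).im / θ.im := by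
  simp only [cauchyL_eq_prod_cauchyDensity]
  rw [logDeriv_prod (fun j _ ↦ by simpa using cauchyDensity_ne_zero hθ (x j))
    (fun j _ ↦ (hasDerivAt_cauchyDensity_line hθ (x j) v).differentiableAt)]
  simp only [logDeriv_cauchyDensity_line hθ, mul_sum, im_sum, ← sum_div, sum_neg_distrib]

theorem stmt_3_general {n : ℕ} (x : Fin n → ℝ) {θ : ℂ} (hθ : θ.im ≠ 0)
    (hextr : IsLocalExtr (cauchyL x) θ) :
    ∑ j, ((x j : ℂ) - θ) / ((x j : ℂ) - conj θ) = 0 := by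
  have hdir (v : ℂ) : (conj v * ∑ j, ((x j : ℂ) - θ) / (x j - conj θ)).im = 0 := by
    have hzero := logDeriv_line_eq_zero_of_isLocalExtr hextr v
    rw [logDeriv_cauchyL_line x hθ v] at hzero
    simpa only [div_eq_zero_iff, neg_eq_zero, hθ, or_false] using hzero
  apply Complex.ext
  · simpa using hdir I
  · simpa using hdir 1

theorem stmt_3 (n : ℕ) (hn : 3 ≤ n) (x : Fin n → ℝ) (hx : Function.Injective x)
    (θhat : ℂ) (hθhat : 0 < θhat.im)
    (hmax : ∀ θ : ℂ, 0 < θ.im → cauchyL x θ ≤ cauchyL x θhat) :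
    ∑ j, ((x j : ℂ) - θhat) / ((x j : ℂ) - (starRingEnd ℂ) θhat) = 0 := by
  have him_pos : ∀ᶠ θ : ℂ in nhds θhat, 0 < θ.im :=
    continuous_im.continuousAt.eventually (lt_mem_nhds hθhat)
  exact stmt_3_general x hθhat.ne' (.inr (him_pos.mono hmax))
end

section
/- Let n ≥ 2 and let x_1, …, x_n be real numbers, not all equal. Then for every θ ∈ ℍ one has Im(q(θ)) < 0; that is, q maps the open upper half-plane into the open lower half-plane. -/
open Complex Finset

/-!
Logarithmic differentiation gives `q(θ) = θ + H`, where `H` is the harmonic mean of the points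
`x_j - θ`. These lie on the line `im z = -im θ`, which inversion maps into the circle
`im θ * ‖w‖ ^ 2 = im w`. Since the disc it bounds is strictly convex, the mean of the inverses lies
in the open disc, and inverting back gives `im H < -im θ`.
-/

section HarmonicMean

/-- The harmonic mean of the complex numbers `z i`, `i ∈ s`, with real weights `p i`, which are
meant to sum to `1`. Its value is `0` when the weighted mean of the inverses vanishes. -/
noncomputable def harmonicMean {ι : Type*} (s : Finset ι) (p : ι → ℝ) (z : ι → ℂ) : ℂ :=
  (∑ i ∈ s, p i • (z i)⁻¹)⁻¹

variable {c : ℝ}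

theorem strictConvexOn_mul_norm_sq_add {E : Type*} [NormedAddCommGroup E] [InnerProductSpace ℝ E]
    {t : Set E} {f : E → ℝ} (hc : 0 < c) (hf : ConvexOn ℝ t f) :
    StrictConvexOn ℝ t fun w ↦ c * ‖w‖ ^ 2 + f w := by
  have hstrong : StrongConvexOn t (2 * c) fun w ↦ c * ‖w‖ ^ 2 + f w := by
    rw [strongConvexOn_iff_convex]
    convert hf using 2
    ring
  exact hstrong.strictConvexOn (by positivity)

theorem mul_norm_inv_sq_le_im_inv {z : ℂ} (hz : z.im ≤ -c) : c * ‖z⁻¹‖ ^ 2 ≤ z⁻¹.im := by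
  rw [inv_im, norm_inv, inv_pow, ← normSq_eq_norm_sq, ← div_eq_mul_inv]
  gcongr
  · exact normSq_nonneg z
  · linarith

theorem im_inv_lt_neg {w : ℂ} (hw : c * ‖w‖ ^ 2 < w.im) : w⁻¹.im < -c := by
  have hw₀ : w ≠ 0 := by
    rintro rfl
    simp at hw
  rw [inv_im, neg_div, neg_lt_neg_iff, lt_div_iff₀ (normSq_pos.2 hw₀), normSq_eq_norm_sq]
  exact hw

theorem im_harmonicMean_lt_neg {ι : Type*} {s : Finset ι} {p : ι → ℝ} {z : ι → ℂ} (hc : 0 < c)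
    (hp : ∀ i ∈ s, 0 < p i) (hp_sum : ∑ i ∈ s, p i = 1) (hz : ∀ i ∈ s, (z i).im ≤ -c)
    (hne : ∃ i ∈ s, ∃ j ∈ s, z i ≠ z j) :
    (harmonicMean s p z).im < -c := by
  have hconvex : StrictConvexOn ℝ Set.univ fun w : ℂ ↦ c * ‖w‖ ^ 2 + -w.im :=
    strictConvexOn_mul_norm_sq_add hc ((-imLm).convexOn convex_univ)
  have hne_inv : ∃ i ∈ s, ∃ j ∈ s, (z i)⁻¹ ≠ (z j)⁻¹ := by
    simpa only [ne_eq, inv_inj] using hne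
  have hjensen := hconvex.map_sum_lt hp hp_sum (fun _ _ ↦ Set.mem_univ _) hne_inv
  have hnonpos : ∑ i ∈ s, p i • (c * ‖(z i)⁻¹‖ ^ 2 + -(z i)⁻¹.im) ≤ 0 :=
    sum_nonpos fun i hi ↦ smul_nonpos_of_nonneg_of_nonpos (hp i hi).le
      (by linarith [mul_norm_inv_sq_le_im_inv (hz i hi)])
  exact im_inv_lt_neg (by linarith)

end HarmonicMean

section LogDeriv

variable {n : ℕ} {x : Fin n → ℝ} {θ : ℂ}

theorem logDeriv_hpoly (hθ : ∀ j, (x j : ℂ) ≠ θ) :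
    logDeriv (hpoly x) θ = -∑ j, ((x j : ℂ) - θ)⁻¹ := by
  unfold hpoly
  rw [logDeriv_prod (fun j _ ↦ sub_ne_zero.2 (hθ j)) (fun j _ ↦ by fun_prop),
    ← sum_neg_distrib]
  refine sum_congr rfl fun j _ ↦ ?_
  rw [logDeriv_apply, deriv_const_sub, deriv_id'', neg_div, one_div]

theorem qmap_eq_add_harmonicMean (hθ : ∀ j, (x j : ℂ) ≠ θ) :
    qmap x θ = θ + harmonicMean univ (fun _ ↦ (n : ℝ)⁻¹) (fun j ↦ (x j : ℂ) - θ) := by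
  calc qmap x θ
    _ = θ - n / logDeriv (hpoly x) θ := by rw [qmap, logDeriv_apply, div_div_eq_mul_div]
    _ = θ + harmonicMean univ (fun _ ↦ (n : ℝ)⁻¹) (fun j ↦ (x j : ℂ) - θ) := by
      rw [logDeriv_hpoly hθ, harmonicMean, ← smul_sum, real_smul, div_neg, sub_neg_eq_add]
      simp [div_eq_mul_inv, mul_comm]

end LogDeriv

theorem stmt_4 (n : ℕ) (hn : 2 ≤ n) (x : Fin n → ℝ)
    (hx : ∃ i j, x i ≠ x j) :
    ∀ θ : ℂ, 0 < θ.im → (qmap x θ).im < 0 := by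
  intro θ hθ
  have hn_pos : (0 : ℝ) < n := Nat.cast_pos.2 (by lia)
  have hx_ne (j : Fin n) : (x j : ℂ) ≠ θ := by
    rintro rfl
    simp at hθ
  have hmean : (harmonicMean univ (fun _ ↦ (n : ℝ)⁻¹) (fun j ↦ (x j : ℂ) - θ)).im < -θ.im :=
    im_harmonicMean_lt_neg hθ (fun _ _ ↦ inv_pos.2 hn_pos) (by simp [hn_pos.ne'])
      (fun j _ ↦ by simp) (by simpa using hx)
  rw [qmap_eq_add_harmonicMean hx_ne, add_im]
  linarith
end

section
/- Let n ≥ 3. For each m ∈ ℕ ∪ {∞}, let x_1^{(m)}, …, x_n^{(m)} be distinct real numbers and let θ̂^{(m)} ∈ ℍ be the unique maximizer over ℍ of the Cauchy likelihood of the sample (x_1^{(m)}, …, x_n^{(m)}). If (x_1^{(m)}, …, x_n^{(m)}) converges in ℝⁿ to (x_1^{(∞)}, …, x_n^{(∞)}) as m → ∞, then θ̂^{(m)} → θ̂^{(∞)} as m → ∞. -/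
open Complex Finset Filter

/-!
Maximizing the likelihood means minimizing the product of the reciprocal Poisson kernels
`|x j - θ| ^ 2 / Im θ`. The logarithm of such a kernel is a Busemann function, which is convex
along hyperbolic geodesics, strictly so unless the geodesic ends at `x j`. A geodesic has only two
ends, so with three distinct sample points the minimizer is unique. Any two kernels satisfy
`(x i - x j) ^ 2 ≤ |x i - θ| ^ 2 / Im θ * (|x j - θ| ^ 2 / Im θ)`, so a bound on the product over
at least three distinct points bounds every kernel, and the minimizers of all samples near a given
one stay in a compact subset of the half-plane. Each of their cluster points minimizes the limiting
product, hence is the unique minimizer.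
-/

open Topology
open UpperHalfPlane (upperHalfPlaneSet)

section General

theorem tendsto_of_isMinOn_of_unique {P Y α R : Type*} [TopologicalSpace P] [TopologicalSpace Y]
    [TopologicalSpace R] [Preorder R] [OrderClosedTopology R] {f : P → Y → R}
    {S K : Set Y} {l : Filter α} {p : α → P} {y : α → Y} {p₀ : P} {y₀ : Y}
    (hf : ∀ z ∈ S, ContinuousAt (Function.uncurry f) (p₀, z)) (hK : IsCompact K) (hKS : K ⊆ S)
    (hp : Tendsto p l (𝓝 p₀)) (hyK : ∀ᶠ m in l, y m ∈ K)
    (hmin : ∀ᶠ m in l, IsMinOn (f (p m)) S (y m))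
    (huniq : ∀ z ∈ S, IsMinOn (f p₀) S z → z = y₀) :
    Tendsto y l (𝓝 y₀) := by
  refine hK.tendsto_nhds_of_unique_mapClusterPt hyK fun z hz hcluster ↦ ?_
  obtain ⟨U, hU, hyz⟩ := mapClusterPt_iff_ultrafilter.1 hcluster
  have hpU : Tendsto p U (𝓝 p₀) := hp.mono_left hU
  refine huniq z (hKS hz) (isMinOn_iff.2 fun w hw ↦ ?_)
  have hlim_z : Tendsto (fun m ↦ f (p m) (y m)) U (𝓝 (f p₀ z)) :=
    (hf z (hKS hz)).tendsto.comp (hpU.prodMk_nhds hyz)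
  have hlim_w : Tendsto (fun m ↦ f (p m) w) U (𝓝 (f p₀ w)) :=
    (hf w hw).tendsto.comp (hpU.prodMk_nhds tendsto_const_nhds)
  exact le_of_tendsto_of_tendsto hlim_z hlim_w (hU (hmin.mono fun m hm ↦ hm hw))

theorem pow_card_le_prod_of_pairwise_sq_le_mul {ι R : Type*} [CommSemiring R] [LinearOrder R]
    [IsStrictOrderedRing R] {s : Finset ι} (hs : s.Nontrivial) {q : ι → R} {δ : R} (hδ : 0 ≤ δ)
    (hq : ∀ i ∈ s, 0 ≤ q i) (hpair : (s : Set ι).Pairwise fun i j ↦ δ ^ 2 ≤ q i * q j) :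
    δ ^ #s ≤ ∏ i ∈ s, q i := by
  -- Pair each factor with its image under a cyclic permutation of `s`, which has no fixed point.
  obtain ⟨σ, hσ, hsupp⟩ := s.countable_toSet.exists_cycleOn
  have hprod_σ : ∏ i ∈ s, q (σ i) = ∏ i ∈ s, q i :=
    σ.prod_comp s q hsupp
  refine (pow_le_pow_iff_left₀ (pow_nonneg hδ _) (prod_nonneg hq) two_ne_zero).1 ?_
  calc (δ ^ #s) ^ 2 = ∏ _i ∈ s, δ ^ 2 := by rw [prod_const, pow_right_comm]
    _ ≤ ∏ i ∈ s, q i * q (σ i) := Finset.prod_le_prod (fun _ _ ↦ pow_nonneg hδ 2) fun i hi ↦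
        hpair hi (hσ.1.mapsTo hi) (hσ.apply_ne hs hi).symm
    _ = (∏ i ∈ s, q i) ^ 2 := by rw [prod_mul_distrib, hprod_σ, sq]

theorem quadratic_coeffs_eq_zero {ι R : Type*} [Fintype ι] [CommRing R] [IsDomain R]
    (hι : 3 ≤ Fintype.card ι) {x : ι → R} (hx : Function.Injective x) {a b c : R}
    (h : ∀ i, a * x i ^ 2 + b * x i + c = 0) : a = 0 ∧ b = 0 ∧ c = 0 := by
  open Polynomial in
  have hzero : (C a * X ^ 2 + C b * X + C c : R[X]) = 0 :=
    eq_zero_of_natDegree_lt_card_of_eval_eq_zero _ hx (by simpa using h)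
      (natDegree_quadratic_le.trans_lt hι)
  refine ⟨?_, ?_, ?_⟩
  · simpa [Polynomial.coeff_X, Polynomial.coeff_C] using congrArg (Polynomial.coeff · 2) hzero
  · simpa [Polynomial.coeff_X, Polynomial.coeff_C] using congrArg (Polynomial.coeff · 1) hzero
  · simpa [Polynomial.coeff_X, Polynomial.coeff_C] using congrArg (Polynomial.coeff · 0) hzero

theorem exists_pos_eventually_pairwise_le_abs_sub {ι : Type*} [Finite ι] {x₀ : ι → ℝ}
    (hx₀ : Function.Injective x₀) :
    ∃ δ > 0, ∀ᶠ x in 𝓝 x₀, Pairwise fun i j ↦ δ ≤ |x i - x j| := by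
  have hnear : ∀ᶠ p : ℝ × (ι → ℝ) in 𝓝 (0, x₀), ∀ i j, i ≠ j → p.1 < |p.2 i - p.2 j| := by
    simp only [eventually_all]
    intro i j hij
    have hpos : 0 < |x₀ i - x₀ j| := abs_pos.2 (sub_ne_zero.2 (hx₀.ne hij))
    exact ContinuousAt.eventually_lt (by fun_prop) (by fun_prop) hpos
  have hsep_right : ∀ᶠ δ in 𝓝[>] (0 : ℝ), ∀ᶠ x in 𝓝 x₀, ∀ i j, i ≠ j → δ < |x i - x j| :=
    hnear.curry_nhds.filter_mono nhdsWithin_le_nhds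
  obtain ⟨δ, hsep, hδ⟩ := (hsep_right.and self_mem_nhdsWithin).exists
  exact ⟨δ, hδ, hsep.mono fun x hx i j hij ↦ (hx i j hij).le⟩

end General

section Kernel

/-- The reciprocal `|x - θ| ^ 2 / Im θ` of the Poisson kernel of the upper half-plane at the
boundary point `x`, without the factor `π`. It is meaningful only for `0 < θ.im`. -/
noncomputable def invPoissonKernel (x : ℝ) (θ : ℂ) : ℝ :=
  ((x - θ.re) ^ 2 + θ.im ^ 2) / θ.im

variable {a b θ : ℂ}

theorem invPoissonKernel_pos (x : ℝ) (hθ : 0 < θ.im) : 0 < invPoissonKernel x θ := by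
  unfold invPoissonKernel
  positivity

theorem continuousAt_invPoissonKernel (x : ℝ) (hθ : 0 < θ.im) :
    ContinuousAt (Function.uncurry invPoissonKernel) (x, θ) := by
  unfold Function.uncurry invPoissonKernel
  exact ContinuousAt.div (by fun_prop) (by fun_prop) hθ.ne'

theorem sq_sub_le_invPoissonKernel_mul (x y : ℝ) (hθ : 0 < θ.im) :
    (x - y) ^ 2 ≤ invPoissonKernel x θ * invPoissonKernel y θ := by
  have hgap : invPoissonKernel x θ * invPoissonKernel y θ - (x - y) ^ 2 =
      (((x - θ.re) * (y - θ.re) + θ.im ^ 2) / θ.im) ^ 2 := by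
    unfold invPoissonKernel
    field
  exact sub_nonneg.1 (hgap ▸ sq_nonneg _)

theorem im_le_of_invPoissonKernel_le {x B : ℝ} (hθ : 0 < θ.im) (h : invPoissonKernel x θ ≤ B) :
    θ.im ≤ B := by
  refine le_trans ?_ h
  rw [invPoissonKernel, le_div_iff₀ hθ]
  nlinarith [sq_nonneg (x - θ.re)]

theorem sq_sub_re_le_of_invPoissonKernel_le {x B : ℝ} (hθ : 0 < θ.im)
    (h : invPoissonKernel x θ ≤ B) : (x - θ.re) ^ 2 ≤ B * θ.im := by
  rw [invPoissonKernel, div_le_iff₀ hθ] at h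
  linarith [sq_nonneg θ.im]

theorem abs_sub_re_le_of_invPoissonKernel_le {x B : ℝ} (hθ : 0 < θ.im)
    (h : invPoissonKernel x θ ≤ B) : |x - θ.re| ≤ B := by
  have him : θ.im ≤ B := im_le_of_invPoissonKernel_le hθ h
  refine abs_le_of_sq_le_sq ?_ (hθ.le.trans him)
  nlinarith [sq_sub_re_le_of_invPoissonKernel_le hθ h]

theorem sq_sub_le_of_invPoissonKernel_le {x y B : ℝ} (hθ : 0 < θ.im)
    (hx : invPoissonKernel x θ ≤ B) (hy : invPoissonKernel y θ ≤ B) :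
    (x - y) ^ 2 ≤ 4 * B * θ.im := by
  have hx' := sq_sub_re_le_of_invPoissonKernel_le hθ hx
  have hy' := sq_sub_re_le_of_invPoissonKernel_le hθ hy
  linarith [sq_nonneg ((x - θ.re) + (y - θ.re))]

/-- The midpoint of the hyperbolic geodesic segment from `a` to `b` in the upper half-plane. -/
noncomputable def geodesicMidpoint (a b : ℂ) : ℂ :=
  ⟨(a.re * b.im + b.re * a.im) / (a.im + b.im),
    √(((a.re - b.re) ^ 2 + (a.im + b.im) ^ 2) * (a.im * b.im)) / (a.im + b.im)⟩

/-- A quadratic function of `x` whose zeros are the ends of the hyperbolic geodesic through `a` and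
`b`; it measures the failure of equality in the midpoint convexity of `log (invPoissonKernel x)`. -/
def geodesicForm (a b : ℂ) (x : ℝ) : ℝ :=
  (b.re - a.re) * (x - a.re) * (x - b.re) + a.im ^ 2 * (x - b.re) - b.im ^ 2 * (x - a.re)

theorem geodesicMidpoint_im_pos (ha : 0 < a.im) (hb : 0 < b.im) :
    0 < (geodesicMidpoint a b).im := by
  simp only [geodesicMidpoint]
  positivity

-- In terms of the hyperbolic distance `d` of `a` and `b`, the square root is
-- `2 * cosh (d / 2) * (a.im * b.im)`.
theorem invPoissonKernel_geodesicMidpoint (ha : 0 < a.im) (hb : 0 < b.im) (x : ℝ) :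
    invPoissonKernel x (geodesicMidpoint a b) =
      a.im * b.im * (invPoissonKernel x a + invPoissonKernel x b) /
        √(((a.re - b.re) ^ 2 + (a.im + b.im) ^ 2) * (a.im * b.im)) := by
  simp only [invPoissonKernel, geodesicMidpoint]
  set w := √(((a.re - b.re) ^ 2 + (a.im + b.im) ^ 2) * (a.im * b.im))
  have hw : 0 < w := by positivity
  have hw_sq : w ^ 2 = ((a.re - b.re) ^ 2 + (a.im + b.im) ^ 2) * (a.im * b.im) :=
    Real.sq_sqrt (by positivity)
  field_simp
  rw [hw_sq]
  ring

theorem invPoissonKernel_mul_sub_geodesicMidpoint_sq (ha : 0 < a.im) (hb : 0 < b.im) (x : ℝ) :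
    invPoissonKernel x a * invPoissonKernel x b - invPoissonKernel x (geodesicMidpoint a b) ^ 2 =
      geodesicForm a b x ^ 2 /
        (((a.re - b.re) ^ 2 + (a.im + b.im) ^ 2) * (a.im * b.im)) := by
  have : 0 < (a.re - b.re) ^ 2 + (a.im + b.im) ^ 2 := by positivity
  rw [invPoissonKernel_geodesicMidpoint ha hb, div_pow, Real.sq_sqrt (by positivity)]
  simp only [invPoissonKernel, geodesicForm]
  field_simp
  ring

theorem invPoissonKernel_geodesicMidpoint_sq_le (ha : 0 < a.im) (hb : 0 < b.im) (x : ℝ) :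
    invPoissonKernel x (geodesicMidpoint a b) ^ 2 ≤
      invPoissonKernel x a * invPoissonKernel x b := by
  rw [← sub_nonneg, invPoissonKernel_mul_sub_geodesicMidpoint_sq ha hb]
  positivity

theorem invPoissonKernel_geodesicMidpoint_sq_lt (ha : 0 < a.im) (hb : 0 < b.im) {x : ℝ}
    (hx : geodesicForm a b x ≠ 0) :
    invPoissonKernel x (geodesicMidpoint a b) ^ 2 <
      invPoissonKernel x a * invPoissonKernel x b := by
  rw [← sub_pos, invPoissonKernel_mul_sub_geodesicMidpoint_sq ha hb]
  positivity

theorem exists_geodesicForm_ne_zero {ι : Type*} [Fintype ι] (hι : 3 ≤ Fintype.card ι) {x : ι → ℝ}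
    (hx : Function.Injective x) (ha : 0 < a.im) (hb : 0 < b.im) (hab : a ≠ b) :
    ∃ i, geodesicForm a b (x i) ≠ 0 := by
  by_contra! hzero
  obtain ⟨hre, him, -⟩ := quadratic_coeffs_eq_zero hι hx (a := b.re - a.re)
    (b := a.im ^ 2 - b.im ^ 2 - (b.re - a.re) * (a.re + b.re))
    (c := (b.re - a.re) * a.re * b.re - a.im ^ 2 * b.re + b.im ^ 2 * a.re)
    fun i ↦ by rw [← hzero i, geodesicForm]; ring
  rw [hre, zero_mul, sub_zero, sub_eq_zero] at him
  exact hab (Complex.ext (sub_eq_zero.1 hre).symm ((sq_eq_sq₀ ha.le hb.le).1 him))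

end Kernel

section Product

variable {ι : Type*} [Fintype ι]

/-- The product of the reciprocal Poisson kernels at the sample points; up to a constant factor it
is the reciprocal of the Cauchy likelihood. -/
noncomputable def invPoissonProd (x : ι → ℝ) (θ : ℂ) : ℝ :=
  ∏ j, invPoissonKernel (x j) θ

theorem invPoissonProd_pos (x : ι → ℝ) {θ : ℂ} (hθ : 0 < θ.im) : 0 < invPoissonProd x θ :=
  prod_pos fun j _ ↦ invPoissonKernel_pos (x j) hθ

theorem continuousAt_invPoissonProd (x : ι → ℝ) {θ : ℂ} (hθ : 0 < θ.im) :
    ContinuousAt (Function.uncurry invPoissonProd) (x, θ) :=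
  tendsto_finsetProd _ fun j _ ↦ (continuousAt_invPoissonKernel (x j) hθ).tendsto.comp
    (f := fun p : (ι → ℝ) × ℂ ↦ (p.1 j, p.2)) (Continuous.tendsto (by fun_prop) (x, θ))

theorem cauchyL_eq_inv {n : ℕ} (x : Fin n → ℝ) (θ : ℂ) :
    cauchyL x θ = (Real.pi ^ n * invPoissonProd x θ)⁻¹ := by
  rw [← Fin.prod_const, invPoissonProd, ← prod_mul_distrib, ← prod_inv_distrib, cauchyL]
  refine prod_congr rfl fun j _ ↦ ?_
  rw [invPoissonKernel, mul_inv, inv_div]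
  ring

theorem isMaxOn_cauchyL_iff {n : ℕ} {x : Fin n → ℝ} {θ : ℂ} (hθ : 0 < θ.im) :
    IsMaxOn (cauchyL x) upperHalfPlaneSet θ ↔ IsMinOn (invPoissonProd x) upperHalfPlaneSet θ := by
  rw [isMaxOn_iff, isMinOn_iff]
  refine forall₂_congr fun η hη ↦ ?_
  have hθ_pos := invPoissonProd_pos x hθ
  have hη_pos := invPoissonProd_pos x hη
  rw [cauchyL_eq_inv, cauchyL_eq_inv, inv_le_inv₀ (by positivity) (by positivity),
    mul_le_mul_iff_right₀ (by positivity)]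

theorem invPoissonProd_geodesicMidpoint_sq_lt (hι : 3 ≤ Fintype.card ι) {x : ι → ℝ}
    (hx : Function.Injective x) {a b : ℂ} (ha : 0 < a.im) (hb : 0 < b.im) (hab : a ≠ b) :
    invPoissonProd x (geodesicMidpoint a b) ^ 2 < invPoissonProd x a * invPoissonProd x b := by
  obtain ⟨i, hi⟩ := exists_geodesicForm_ne_zero hι hx ha hb hab
  simp only [invPoissonProd, ← prod_pow, ← prod_mul_distrib]
  exact prod_lt_prod
    (fun j _ ↦ pow_pos (invPoissonKernel_pos (x j) (geodesicMidpoint_im_pos ha hb)) 2)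
    (fun j _ ↦ invPoissonKernel_geodesicMidpoint_sq_le ha hb (x j))
    ⟨i, mem_univ i, invPoissonKernel_geodesicMidpoint_sq_lt ha hb hi⟩

theorem eq_of_isMinOn_invPoissonProd (hι : 3 ≤ Fintype.card ι) {x : ι → ℝ}
    (hx : Function.Injective x) {a b : ℂ} (ha : 0 < a.im) (hb : 0 < b.im)
    (hmin_a : IsMinOn (invPoissonProd x) upperHalfPlaneSet a)
    (hmin_b : IsMinOn (invPoissonProd x) upperHalfPlaneSet b) : a = b := by
  by_contra hab
  have hm : 0 < (geodesicMidpoint a b).im := geodesicMidpoint_im_pos ha hb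
  refine (invPoissonProd_geodesicMidpoint_sq_lt hι hx ha hb hab).not_ge ?_
  rw [sq]
  exact mul_le_mul (hmin_a hm) (hmin_b hm) (invPoissonProd_pos x hb).le (invPoissonProd_pos x hm).le

theorem invPoissonKernel_mul_pow_le_invPoissonProd (hι : 3 ≤ Fintype.card ι) {x : ι → ℝ} {δ : ℝ}
    (hδ : 0 ≤ δ) (hsep : Pairwise fun i j ↦ δ ≤ |x i - x j|) {θ : ℂ} (hθ : 0 < θ.im) (k : ι) :
    invPoissonKernel (x k) θ * δ ^ (Fintype.card ι - 1) ≤ invPoissonProd x θ := by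
  classical
  have hcard : #(univ.erase k) = Fintype.card ι - 1 := card_erase_of_mem (mem_univ k)
  have hnontrivial : (univ.erase k).Nontrivial := one_lt_card_iff_nontrivial.1 (by lia)
  rw [invPoissonProd, ← mul_prod_erase _ _ (mem_univ k), ← hcard]
  refine mul_le_mul_of_nonneg_left ?_ (invPoissonKernel_pos _ hθ).le
  refine pow_card_le_prod_of_pairwise_sq_le_mul hnontrivial hδ
    (fun i _ ↦ (invPoissonKernel_pos _ hθ).le) fun i _ j _ hij ↦ ?_
  calc δ ^ 2 ≤ |x i - x j| ^ 2 := pow_le_pow_left₀ hδ (hsep hij) 2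
    _ = (x i - x j) ^ 2 := sq_abs _
    _ ≤ invPoissonKernel (x i) θ * invPoissonKernel (x j) θ := sq_sub_le_invPoissonKernel_mul _ _ hθ

theorem exists_eventually_invPoissonKernel_le_of_isMinOn (hι : 3 ≤ Fintype.card ι) {x₀ : ι → ℝ}
    (hx₀ : Function.Injective x₀) :
    ∃ B > 0, ∀ᶠ x in 𝓝 x₀, ∀ θ ∈ upperHalfPlaneSet,
      IsMinOn (invPoissonProd x) upperHalfPlaneSet θ → ∀ k, invPoissonKernel (x k) θ ≤ B := by
  obtain ⟨δ, hδ, hsep⟩ := exists_pos_eventually_pairwise_le_abs_sub hx₀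
  have hI : I ∈ upperHalfPlaneSet := by simp [upperHalfPlaneSet]
  have hbound : ∀ᶠ x in 𝓝 x₀, invPoissonProd x I < invPoissonProd x₀ I + 1 :=
    ((continuousAt_invPoissonProd x₀ hI).comp (f := fun x ↦ (x, I))
      (by fun_prop)).eventually_lt_const (lt_add_one _)
  have hpos := invPoissonProd_pos x₀ hI
  refine ⟨(invPoissonProd x₀ I + 1) / δ ^ (Fintype.card ι - 1), by positivity, ?_⟩
  filter_upwards [hsep, hbound] with x hsep_x hbound_x θ hθ hmin k
  rw [le_div_iff₀ (by positivity)]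
  calc invPoissonKernel (x k) θ * δ ^ (Fintype.card ι - 1) ≤ invPoissonProd x θ :=
        invPoissonKernel_mul_pow_le_invPoissonProd hι hδ.le hsep_x hθ k
    _ ≤ invPoissonProd x I := hmin hI
    _ ≤ invPoissonProd x₀ I + 1 := hbound_x.le

theorem exists_isCompact_eventually_mem_of_isMinOn (hι : 3 ≤ Fintype.card ι) {x₀ : ι → ℝ}
    (hx₀ : Function.Injective x₀) :
    ∃ K ⊆ upperHalfPlaneSet, IsCompact K ∧ ∀ᶠ x in 𝓝 x₀, ∀ θ ∈ upperHalfPlaneSet,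
      IsMinOn (invPoissonProd x) upperHalfPlaneSet θ → θ ∈ K := by
  obtain ⟨B, hB, hkernel⟩ := exists_eventually_invPoissonKernel_le_of_isMinOn hι hx₀
  obtain ⟨δ, hδ, hsep⟩ := exists_pos_eventually_pairwise_le_abs_sub hx₀
  obtain ⟨i, j, hij⟩ := Fintype.one_lt_card_iff.1 (by lia : 1 < Fintype.card ι)
  have hnear : ∀ᶠ x in 𝓝 x₀, |x₀ i - x i| < 1 :=
    (continuousAt_const.sub (continuousAt_apply i x₀)).abs.eventually_lt
      continuousAt_const (by simp)
  refine ⟨Metric.closedBall (x₀ i) (B + 1) ×ℂ Set.Icc (δ ^ 2 / (4 * B)) B, ?_,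
    (isCompact_closedBall _ _).reProdIm isCompact_Icc, ?_⟩
  · exact fun θ hθ ↦ lt_of_lt_of_le (by positivity) (mem_reProdIm.1 hθ).2.1
  filter_upwards [hkernel, hsep, hnear] with x hkernel_x hsep_x hnear_x θ hθ hmin
  have hle := hkernel_x θ hθ hmin
  refine mem_reProdIm.2 ⟨?_, ?_, im_le_of_invPoissonKernel_le hθ (hle i)⟩
  · rw [Metric.mem_closedBall', Real.dist_eq]
    linarith [abs_sub_le (x₀ i) (x i) θ.re, abs_sub_re_le_of_invPoissonKernel_le hθ (hle i)]
  · rw [div_le_iff₀' (by positivity)]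
    calc δ ^ 2 ≤ |x i - x j| ^ 2 := pow_le_pow_left₀ hδ.le (hsep_x hij) 2
      _ = (x i - x j) ^ 2 := sq_abs _
      _ ≤ 4 * B * θ.im := sq_sub_le_of_invPoissonKernel_le hθ (hle i) (hle j)

end Product

theorem stmt_9_general {α : Type*} {l : Filter α} {n : ℕ} (hn : 3 ≤ n)
    {x : α → Fin n → ℝ} {xlim : Fin n → ℝ} (hxlim : Function.Injective xlim)
    {θhat : α → ℂ} {θhatlim : ℂ} (hθ : ∀ᶠ m in l, 0 < (θhat m).im)
    (hmax : ∀ᶠ m in l, IsMaxOn (cauchyL (x m)) upperHalfPlaneSet (θhat m))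
    (hθlim : 0 < θhatlim.im) (hmaxlim : IsMaxOn (cauchyL xlim) upperHalfPlaneSet θhatlim)
    (hconv : Tendsto x l (𝓝 xlim)) :
    Tendsto θhat l (𝓝 θhatlim) := by
  have hcard : 3 ≤ Fintype.card (Fin n) := by rwa [Fintype.card_fin]
  have hmin : ∀ᶠ m in l, IsMinOn (invPoissonProd (x m)) upperHalfPlaneSet (θhat m) := by
    filter_upwards [hθ, hmax] with m hθm hmaxm using (isMaxOn_cauchyL_iff hθm).1 hmaxm
  obtain ⟨K, hKS, hK, hmemK⟩ := exists_isCompact_eventually_mem_of_isMinOn hcard hxlim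
  refine tendsto_of_isMinOn_of_unique (fun θ hθ ↦ continuousAt_invPoissonProd xlim hθ) hK hKS hconv
    ?_ hmin fun θ hθ hminθ ↦ ?_
  · filter_upwards [hconv.eventually hmemK, hθ, hmin] with m hm hθm hminm using hm _ hθm hminm
  · exact eq_of_isMinOn_invPoissonProd hcard hxlim hθ hθlim hminθ
      ((isMaxOn_cauchyL_iff hθlim).1 hmaxlim)

theorem stmt_9 (n : ℕ) (hn : 3 ≤ n)
    (x : ℕ → Fin n → ℝ) (xlim : Fin n → ℝ)
    (hx : ∀ m, Function.Injective (x m)) (hxlim : Function.Injective xlim)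
    (θhat : ℕ → ℂ) (θhatlim : ℂ)
    (hθ : ∀ m, 0 < (θhat m).im)
    (hmax : ∀ m, ∀ θ : ℂ, 0 < θ.im → cauchyL (x m) θ ≤ cauchyL (x m) (θhat m))
    (hθlim : 0 < θhatlim.im)
    (hmaxlim : ∀ θ : ℂ, 0 < θ.im → cauchyL xlim θ ≤ cauchyL xlim θhatlim)
    (hconv : Tendsto x atTop (nhds xlim)) :
    Tendsto θhat atTop (nhds θhatlim) :=
  stmt_9_general hn hxlim (.of_forall hθ) (.of_forall hmax) hθlim hmaxlim hconv
end

section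
/- Let x_1 < x_2 < x_3 < x_4 be real numbers. Then θ̂ = (x_2x_4 − x_1x_3)/(x_4 − x_3 + x_2 − x_1) + i·√((x_4 − x_3)(x_3 − x_2)(x_4 − x_1)(x_2 − x_1))/(x_4 − x_3 + x_2 − x_1) lies in ℍ and maximizes the Cauchy likelihood of the sample (x_1, x_2, x_3, x_4) over ℍ: L(θ) ≤ L(θ̂) for all θ ∈ ℍ. -/
open Complex Finset

/-!
Group the sample into the two interlacing pairs `(x₁, x₃)` and `(x₂, x₄)`. The likelihood of a pair
`(a, c)` is at most `1 / (π (c - a))²`, with equality exactly on the circle with diameter `[a, c]`.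
Because the pairs interlace, their circles meet in `ℍ`, and `θ̂` is the point where they meet, so it
maximizes both factors at once.
-/

/-- The power of the point `θ` with respect to the circle in `ℂ` having the real segment `[a, c]` as
a diameter. It vanishes exactly on that circle, whose upper half is the hyperbolic geodesic of `ℍ`
from `a` to `c`. -/
def diameterPower (a c : ℝ) (θ : ℂ) : ℝ :=
  (a - θ.re) * (c - θ.re) + θ.im ^ 2

/-- For `x₁ < x₂ < x₃ < x₄`, the point of `ℍ` at which the circles with diameters `[x₁, x₃]` and
`[x₂, x₄]` meet. -/
noncomputable def circleCrossing (x₁ x₂ x₃ x₄ : ℝ) : ℂ :=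
  (((x₂ * x₄ - x₁ * x₃) / (x₄ - x₃ + x₂ - x₁) : ℝ) : ℂ) +
    Complex.I *
      ((Real.sqrt ((x₄ - x₃) * (x₃ - x₂) * (x₄ - x₁) * (x₂ - x₁)) /
        (x₄ - x₃ + x₂ - x₁) : ℝ) : ℂ)

section Likelihood

theorem cauchyL_nonneg {n : ℕ} (x : Fin n → ℝ) {θ : ℂ} (hθ : 0 ≤ θ.im) : 0 ≤ cauchyL x θ :=
  prod_nonneg fun _ _ => by positivity

theorem cauchyL_four_eq_mul (a b c d : ℝ) (θ : ℂ) :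
    cauchyL ![a, b, c, d] θ = cauchyL ![a, c] θ * cauchyL ![b, d] θ := by
  simp only [cauchyL, Fin.prod_univ_four, Fin.prod_univ_two, Matrix.cons_val]
  ring

variable {a b c d : ℝ} {θ θ₀ : ℂ}

theorem cauchyL_pair (a c : ℝ) (θ : ℂ) :
    cauchyL ![a, c] θ =
      (θ.im / Real.pi) ^ 2 / (diameterPower a c θ ^ 2 + ((c - a) * θ.im) ^ 2) := by
  have lagrange_identity : ((a - θ.re) ^ 2 + θ.im ^ 2) * ((c - θ.re) ^ 2 + θ.im ^ 2) =
      diameterPower a c θ ^ 2 + ((c - a) * θ.im) ^ 2 := by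
    unfold diameterPower
    ring
  simp only [cauchyL, Fin.prod_univ_two, Matrix.cons_val]
  rw [div_mul_div_comm, lagrange_identity, sq (θ.im / Real.pi)]

theorem cauchyL_pair_of_diameterPower_eq_zero (hθ : θ.im ≠ 0) (h : diameterPower a c θ = 0) :
    cauchyL ![a, c] θ = 1 / (Real.pi * (c - a)) ^ 2 := by
  rw [cauchyL_pair, h, zero_pow two_ne_zero, zero_add]
  field_simp

theorem cauchyL_pair_le (hac : a ≠ c) (hθ : θ.im ≠ 0) :
    cauchyL ![a, c] θ ≤ 1 / (Real.pi * (c - a)) ^ 2 := by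
  have hca : c - a ≠ 0 := sub_ne_zero.mpr hac.symm
  calc cauchyL ![a, c] θ
      = (θ.im / Real.pi) ^ 2 / (diameterPower a c θ ^ 2 + ((c - a) * θ.im) ^ 2) :=
        cauchyL_pair a c θ
    _ ≤ (θ.im / Real.pi) ^ 2 / ((c - a) * θ.im) ^ 2 := by
        gcongr
        exact le_add_of_nonneg_left (sq_nonneg _)
    _ = 1 / (Real.pi * (c - a)) ^ 2 := by field_simp

theorem cauchyL_four_le_of_diameterPower_eq_zero (hac : a ≠ c) (hbd : b ≠ d) (hθ₀ : 0 < θ₀.im)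
    (hac₀ : diameterPower a c θ₀ = 0) (hbd₀ : diameterPower b d θ₀ = 0) (hθ : 0 < θ.im) :
    cauchyL ![a, b, c, d] θ ≤ cauchyL ![a, b, c, d] θ₀ := by
  rw [cauchyL_four_eq_mul, cauchyL_four_eq_mul,
    cauchyL_pair_of_diameterPower_eq_zero hθ₀.ne' hac₀,
    cauchyL_pair_of_diameterPower_eq_zero hθ₀.ne' hbd₀]
  exact mul_le_mul (cauchyL_pair_le hac hθ.ne') (cauchyL_pair_le hbd hθ.ne')
    (cauchyL_nonneg _ hθ.le) (by positivity)

end Likelihood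

section Crossing

variable {x₁ x₂ x₃ x₄ : ℝ}

theorem circleCrossing_re (x₁ x₂ x₃ x₄ : ℝ) :
    (circleCrossing x₁ x₂ x₃ x₄).re = (x₂ * x₄ - x₁ * x₃) / (x₄ - x₃ + x₂ - x₁) := by
  rw [circleCrossing, add_re, re_mul_ofReal, ofReal_re, I_re, zero_mul, add_zero]

theorem circleCrossing_im (x₁ x₂ x₃ x₄ : ℝ) :
    (circleCrossing x₁ x₂ x₃ x₄).im =
      Real.sqrt ((x₄ - x₃) * (x₃ - x₂) * (x₄ - x₁) * (x₂ - x₁)) / (x₄ - x₃ + x₂ - x₁) := by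
  rw [circleCrossing, add_im, im_mul_ofReal, ofReal_im, I_im, one_mul, zero_add]

theorem circleCrossing_im_sq (hR : 0 ≤ (x₄ - x₃) * (x₃ - x₂) * (x₄ - x₁) * (x₂ - x₁)) :
    (circleCrossing x₁ x₂ x₃ x₄).im ^ 2 =
      (x₄ - x₃) * (x₃ - x₂) * (x₄ - x₁) * (x₂ - x₁) / (x₄ - x₃ + x₂ - x₁) ^ 2 := by
  rw [circleCrossing_im, div_pow, Real.sq_sqrt hR]

theorem circleCrossing_im_pos (hD : 0 < x₄ - x₃ + x₂ - x₁)
    (hR : 0 < (x₄ - x₃) * (x₃ - x₂) * (x₄ - x₁) * (x₂ - x₁)) :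
    0 < (circleCrossing x₁ x₂ x₃ x₄).im := by
  rw [circleCrossing_im]
  exact div_pos (Real.sqrt_pos.mpr hR) hD

theorem diameterPower_circleCrossing_left (hD : x₄ - x₃ + x₂ - x₁ ≠ 0)
    (hR : 0 ≤ (x₄ - x₃) * (x₃ - x₂) * (x₄ - x₁) * (x₂ - x₁)) :
    diameterPower x₁ x₃ (circleCrossing x₁ x₂ x₃ x₄) = 0 := by
  rw [diameterPower, circleCrossing_im_sq hR, circleCrossing_re]
  field_simp
  ring

theorem diameterPower_circleCrossing_right (hD : x₄ - x₃ + x₂ - x₁ ≠ 0)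
    (hR : 0 ≤ (x₄ - x₃) * (x₃ - x₂) * (x₄ - x₁) * (x₂ - x₁)) :
    diameterPower x₂ x₄ (circleCrossing x₁ x₂ x₃ x₄) = 0 := by
  rw [diameterPower, circleCrossing_im_sq hR, circleCrossing_re]
  field_simp
  ring

end Crossing

theorem stmt_11 (x₁ x₂ x₃ x₄ : ℝ) (h12 : x₁ < x₂) (h23 : x₂ < x₃) (h34 : x₃ < x₄)
    (θhat : ℂ)
    (hθhat : θhat =
      (((x₂ * x₄ - x₁ * x₃) / (x₄ - x₃ + x₂ - x₁) : ℝ) : ℂ) +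
        Complex.I *
          ((Real.sqrt ((x₄ - x₃) * (x₃ - x₂) * (x₄ - x₁) * (x₂ - x₁)) /
            (x₄ - x₃ + x₂ - x₁) : ℝ) : ℂ)) :
    0 < θhat.im ∧
      ∀ θ : ℂ, 0 < θ.im →
        cauchyL ![x₁, x₂, x₃, x₄] θ ≤ cauchyL ![x₁, x₂, x₃, x₄] θhat := by
  have hD : 0 < x₄ - x₃ + x₂ - x₁ := by linarith
  have hR : 0 < (x₄ - x₃) * (x₃ - x₂) * (x₄ - x₁) * (x₂ - x₁) :=
    mul_pos (mul_pos (mul_pos (sub_pos.mpr h34) (sub_pos.mpr h23))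
      (sub_pos.mpr (h12.trans (h23.trans h34)))) (sub_pos.mpr h12)
  have hcross : θhat = circleCrossing x₁ x₂ x₃ x₄ := hθhat
  have him : 0 < θhat.im := hcross ▸ circleCrossing_im_pos hD hR
  have hpower₁₃ : diameterPower x₁ x₃ θhat = 0 :=
    hcross ▸ diameterPower_circleCrossing_left hD.ne' hR.le
  have hpower₂₄ : diameterPower x₂ x₄ θhat = 0 :=
    hcross ▸ diameterPower_circleCrossing_right hD.ne' hR.le
  exact ⟨him, fun _ hθ => cauchyL_four_le_of_diameterPower_eq_zero (h12.trans h23).ne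
    (h23.trans h34).ne him hpower₁₃ hpower₂₄ hθ⟩
end
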